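/- arXiv:2411.05443 — 2 statements merged into one kernel-verified Lean document; each statement's English description precedes it below -/
import Mathlib

section
/- Let (X, d) be a metric space, let S be a subset of X, and let 𝒞 and 𝒟 be two partitions of S such that every block of 𝒞 and every block of 𝒟 has diameter at most δ (for some δ ≥ 0). Then for every block C of 𝒞, the image of C in 𝒟, i.e. the union of all blocks D of 𝒟 with C ∩ D ≠ ∅, has diameter at most 3δ. -/
/-- A collection `P` of subsets of `X` is a partition of the set `S` if its blocks are
nonempty, pairwise disjoint, and their union is `S`. -/
def IsPartitionOf {X : Type*} (S : Set X) (P : Set (Set X)) : Prop :=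
  (∀ A ∈ P, A.Nonempty) ∧
  (∀ A ∈ P, ∀ B ∈ P, A ≠ B → Disjoint A B) ∧
  ⋃₀ P = S

/-- **Clustering stability.** If `𝒞` and `𝒟` are two partitions of `S ⊆ X` all of whose
blocks have diameter at most `δ`, then for every block `C` of `𝒞`, the union of all blocks
of `𝒟` meeting `C` has diameter at most `3δ`. -/
theorem clustering_stability {X : Type*} [MetricSpace X] (S : Set X)
    (𝒞 𝒟 : Set (Set X)) (δ : ℝ) (hδ : 0 ≤ δ)
    (h𝒞 : IsPartitionOf S 𝒞) (h𝒟 : IsPartitionOf S 𝒟)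
    (h𝒞diam : ∀ A ∈ 𝒞, EMetric.diam A ≤ ENNReal.ofReal δ)
    (h𝒟diam : ∀ A ∈ 𝒟, EMetric.diam A ≤ ENNReal.ofReal δ)
    (C : Set X) (hC : C ∈ 𝒞) :
    EMetric.diam (⋃₀ {D | D ∈ 𝒟 ∧ (C ∩ D).Nonempty}) ≤ ENNReal.ofReal (3 * δ) := by
  apply Metric.ediam_le
  rintro x ⟨D, ⟨hD, p, hpC, hpD⟩, hx⟩ y ⟨E, ⟨hE, q, hqC, hqE⟩, hy⟩
  have h1 : edist x p ≤ ENNReal.ofReal δ :=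
    (Metric.edist_le_ediam_of_mem hx hpD).trans (h𝒟diam D hD)
  have h2 : edist p q ≤ ENNReal.ofReal δ :=
    (Metric.edist_le_ediam_of_mem hpC hqC).trans (h𝒞diam C hC)
  have h3 : edist q y ≤ ENNReal.ofReal δ :=
    (Metric.edist_le_ediam_of_mem hqE hy).trans (h𝒟diam E hE)
  have h4 : ENNReal.ofReal (3 * δ)
      = ENNReal.ofReal δ + ENNReal.ofReal δ + ENNReal.ofReal δ := by
    rw [← ENNReal.ofReal_add hδ hδ, ← ENNReal.ofReal_add (by linarith) hδ]
    congr 1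
    ring
  rw [h4]
  exact (edist_triangle4 x p q y).trans (add_le_add (add_le_add h1 h2) h3)
end

section
/- Let (X, d) be a metric space and let C, D₁, D₂ be finite nonempty subsets of X, each of diameter at most δ (for some δ ≥ 0). If C ∩ D₁ ≠ ∅ and C ∩ D₂ ≠ ∅, then the average pairwise distance avg(D₁, D₂) = (1 / (|D₁| · |D₂|)) · Σ_{x ∈ D₁} Σ_{y ∈ D₂} d(x, y) is at most 3δ. -/
/-- **ClusterGraph stability, average-distance case.** If `C`, `D₁`, `D₂` are finite
nonempty subsets of a metric space, each of diameter at most `δ`, and `C` meets both `D₁`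
and `D₂`, then the average pairwise distance between `D₁` and `D₂` is at most `3δ`. -/
theorem clusterGraph_stability_avg {X : Type*} [MetricSpace X] [DecidableEq X]
    (C D₁ D₂ : Finset X) (δ : ℝ) (hδ : 0 ≤ δ)
    (hCne : C.Nonempty) (hD₁ne : D₁.Nonempty) (hD₂ne : D₂.Nonempty)
    (hC : EMetric.diam (C : Set X) ≤ ENNReal.ofReal δ)
    (hD₁ : EMetric.diam (D₁ : Set X) ≤ ENNReal.ofReal δ)
    (hD₂ : EMetric.diam (D₂ : Set X) ≤ ENNReal.ofReal δ)
    (hCD₁ : (C ∩ D₁).Nonempty) (hCD₂ : (C ∩ D₂).Nonempty) :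
    (∑ x ∈ D₁, ∑ y ∈ D₂, dist x y) / ((D₁.card : ℝ) * (D₂.card : ℝ)) ≤ 3 * δ := by
  have key : ∀ S : Finset X, EMetric.diam (S : Set X) ≤ ENNReal.ofReal δ →
      ∀ x ∈ S, ∀ y ∈ S, dist x y ≤ δ := by
    intro S hS x hx y hy
    have h : edist x y ≤ ENNReal.ofReal δ :=
      (EMetric.edist_le_diam_of_mem (Finset.mem_coe.2 hx) (Finset.mem_coe.2 hy)).trans hS
    rw [edist_dist] at h
    exact (ENNReal.ofReal_le_ofReal_iff hδ).1 h
  obtain ⟨a, ha⟩ := hCD₁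
  obtain ⟨b, hb⟩ := hCD₂
  rw [Finset.mem_inter] at ha hb
  have hxy : ∀ x ∈ D₁, ∀ y ∈ D₂, dist x y ≤ 3 * δ := by
    intro x hx y hy
    have h1 := key D₁ hD₁ x hx a ha.2
    have h2 := key C hC a ha.1 b hb.1
    have h3 := key D₂ hD₂ b hb.2 y hy
    have h4 := dist_triangle4 x a b y
    linarith
  have c1 : (0 : ℝ) < D₁.card := by exact_mod_cast hD₁ne.card_pos
  have c2 : (0 : ℝ) < D₂.card := by exact_mod_cast hD₂ne.card_pos
  rw [div_le_iff₀ (mul_pos c1 c2)]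
  calc (∑ x ∈ D₁, ∑ y ∈ D₂, dist x y) ≤ ∑ x ∈ D₁, ∑ y ∈ D₂, 3 * δ :=
        Finset.sum_le_sum fun x hx => Finset.sum_le_sum fun y hy => hxy x hx y hy
    _ = 3 * δ * ((D₁.card : ℝ) * (D₂.card : ℝ)) := by
        simp only [Finset.sum_const, nsmul_eq_mul]
        ring
end
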